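/- Let M be a C-minimal structure, F = {f_u : u ∈ U} a nice family of functions with domain V and absorbing element e, and g : V → V a definable function with g(e) = e. Then: (1) if u,v ∈ T_g, then the closed ball Λ_{u∧v} = {z ∈ M : ¬C(z,u,v)} is contained in T_g, and moreover there is a cone W with e ∈ W ⊆ V such that Δ(f_u(x), f_z(x), g(x)) holds for all z ∈ Λ_{u∧v} and all x ∈ W; (2) if u ∈ T_g and v ∈ U∖T_g, then the cone Γ = {z ∈ M : C(u,z,v)} of v at u∧v is contained in U∖T_g, and there is a cone W with e ∈ W ⊆ V such that C(f_z(x), f_u(x), g(x)) holds for all z ∈ Γ and all x ∈ W∖{e}; (3) if T_g is nonempty, then it is a ball. -/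

import Mathlib

open FirstOrder Set

universe u

namespace CMinPaper

variable {M : Type u}

/-- The axioms of a (dense) C-relation. -/
def IsCRelation (C : M → M → M → Prop) : Prop :=
  (∀ x y z, C x y z → C x z y) ∧
  (∀ x y z, C x y z → ¬ C y x z) ∧
  (∀ x y z w, C x y z → C x w z ∨ C w y z) ∧
  (∀ x y, x ≠ y → ∃ z, z ≠ y ∧ C x y z)

/-- A cone (open ball). -/
def IsCone (C : M → M → M → Prop) (s : Set M) : Prop :=
  ∃ a b : M, a ≠ b ∧ s = {x | C a x b}

/-- A 0-level set (closed ball). -/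
def IsClosedBall (C : M → M → M → Prop) (s : Set M) : Prop :=
  ∃ a b : M, s = {x | ¬ C x a b}

/-- A ball is a cone or a closed ball. -/
def IsBall (C : M → M → M → Prop) (s : Set M) : Prop :=
  IsCone C s ∨ IsClosedBall C s

/-- The node `a ∧ b` of the underlying tree, viewed as the closed ball
`{z | ¬ C z a b}` of `M` it determines. -/
def node (C : M → M → M → Prop) (a b : M) : Set M := {x | ¬ C x a b}

/-- `Δ(x,y,z)`. -/
def Delta (C : M → M → M → Prop) (x y z : M) : Prop := ¬ C x y z ∧ ¬ C y x z

/-- The (unary) sets which are definable by a quantifier-free formula with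
parameters using only `C` and equality.  A term is either the variable
(`Option.none`) or a parameter (`Option.some a`). -/
inductive QFDef (C : M → M → M → Prop) : Set M → Prop
  | atomC (t₁ t₂ t₃ : Option M) :
      QFDef C {x | C (t₁.getD x) (t₂.getD x) (t₃.getD x)}
  | atomEq (t₁ t₂ : Option M) : QFDef C {x | t₁.getD x = t₂.getD x}
  | compl {s : Set M} : QFDef C s → QFDef C sᶜ
  | union {s t : Set M} : QFDef C s → QFDef C t → QFDef C (s ∪ t)

/-- The ternary relation interpreting the symbol `r`. -/
def interpC (L : FirstOrder.Language.{u, u}) (M : Type u) [L.Structure M]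
    (r : L.Relations 3) : M → M → M → Prop :=
  fun a b c => Language.Structure.RelMap r ![a, b, c]

/-- `M` is C-minimal: in every elementarily equivalent structure, every
definable (with parameters) subset is quantifier-free definable using only
`C` and `=`. -/
def CMinimal (L : FirstOrder.Language.{u, u}) (M : Type u) [L.Structure M]
    (r : L.Relations 3) : Prop :=
  ∀ (N : Type u) (SN : L.Structure N),
    letI := SN
    L.ElementarilyEquivalent M N →
      ∀ s : Set N, Set.Definable₁ (univ : Set N) L s → QFDef (interpC L N r) s

/-- The (model-theoretic) algebraic closure of a set of parameters. -/
def acl (L : FirstOrder.Language.{u, u}) (M : Type u) [L.Structure M] (A : Set M) : Set M :=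
  {a | ∃ s : Set M, Set.Definable₁ A L s ∧ s.Finite ∧ a ∈ s}

/-- The Steinitz exchange property for the algebraic closure. -/
def HasExchange (L : FirstOrder.Language.{u, u}) (M : Type u) [L.Structure M] : Prop :=
  ∀ (A : Set M) (a b : M),
    a ∈ acl L M (A ∪ {b}) → a ∉ acl L M A → b ∈ acl L M (A ∪ {a})

/-- `M` is geometric: acl has the exchange property in every elementarily
equivalent structure. -/
def Geometric (L : FirstOrder.Language.{u, u}) (M : Type u) [L.Structure M] : Prop :=
  ∀ (N : Type u) (SN : L.Structure N),
    letI := SN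
    L.ElementarilyEquivalent M N → HasExchange L N

/-- `M` is trivial: in every elementarily equivalent structure the pregeometry
given by acl is trivial. -/
def TrivialGeometry (L : FirstOrder.Language.{u, u}) (M : Type u) [L.Structure M] : Prop :=
  ∀ (N : Type u) (SN : L.Structure N),
    letI := SN
    L.ElementarilyEquivalent M N →
      ∀ A : Set N, acl L N A = ⋃ a ∈ A, acl L N {a}

/-- `M` is definably maximal: every definable family of cones which is linearly
ordered by inclusion has a non-empty intersection. -/
def DefinablyMaximal (L : FirstOrder.Language.{u, u}) (M : Type u) [L.Structure M]
    (r : L.Relations 3) : Prop :=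
  ∀ (n : ℕ) (S : Set (Fin (n + 1) → M)) (P : Set (Fin n → M)),
    Set.Definable (univ : Set M) L S →
    (∀ p ∈ P, IsCone (interpC L M r) {x | Fin.snoc p x ∈ S}) →
    (∀ p ∈ P, ∀ q ∈ P,
      {x | Fin.snoc p x ∈ S} ⊆ {x | Fin.snoc q x ∈ S} ∨
        {x | Fin.snoc q x ∈ S} ⊆ {x | Fin.snoc p x ∈ S}) →
    P.Nonempty → (⋂ p ∈ P, {x | Fin.snoc p x ∈ S}).Nonempty

/-- Leaves of the underlying tree are the singletons. -/
def IsLeafSet (s : Set M) : Prop := ∃ x : M, s = {x}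

/-- The interval `(lo, hi)` of the branch `br c`, consisting of all nodes
(coded as the closed balls they determine) strictly between the endpoints.
`lo = none` denotes `-∞`; `lo = some p` denotes the node `c ∧ p`; `hi : M`
denotes the node `c ∧ hi` (the leaf `c` when `hi = c`).  The tree ordering is
reverse inclusion of balls. -/
def branchInterval (C : M → M → M → Prop) (c : M) (lo : Option M) (hi : M) :
    Set (Set M) :=
  {B | (∃ s, B = node C c s) ∧ ¬ IsLeafSet B ∧
    (∀ p ∈ lo, B ⊂ node C c p) ∧ node C c hi ⊂ B}

/-- `I` is an interval of the branch `br c`. -/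
def IsIntervalOn (C : M → M → M → Prop) (c : M) (I : Set (Set M)) : Prop :=
  ∃ (lo : Option M) (hi : M), I = branchInterval C c lo hi

/-- `I` is a bounded interval of `br c` (bounded from below and from above). -/
def IsBoundedInterval (C : M → M → M → Prop) (c : M) (I : Set (Set M)) : Prop :=
  ∃ p hi : M, I = branchInterval C c (some p) hi ∧ ¬ IsLeafSet (node C c hi)

/-- `I` is an unbounded (i.e. not bounded) interval of `br c`. -/
def IsUnboundedInterval (C : M → M → M → Prop) (c : M) (I : Set (Set M)) :
    Prop :=
  IsIntervalOn C c I ∧ ¬ IsBoundedInterval C c I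

/-- The relation on nodes coded by `S ⊆ M²` via `(s,t) ↦ (c ∧ s, d ∧ t)`. -/
def codedRel (C : M → M → M → Prop) (S : Set (Fin 2 → M)) (c d : M)
    (B B' : Set M) : Prop :=
  ∃ s t : M, ![s, t] ∈ S ∧ B = node C c s ∧ B' = node C d t

/-- `S ⊆ M²` codes a bijection between the set `I` of nodes of `br c` and the
set `J` of nodes of `br d`. -/
def CodesBijectionBetween (C : M → M → M → Prop) (S : Set (Fin 2 → M))
    (c d : M) (I J : Set (Set M)) : Prop :=
  (∀ B B', codedRel C S c d B B' → B ∈ I ∧ B' ∈ J) ∧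
  (∀ B ∈ I, ∃! B', B' ∈ J ∧ codedRel C S c d B B') ∧
  (∀ B' ∈ J, ∃! B, B ∈ I ∧ codedRel C S c d B B')

/-- Condition (NB): there is no definable bijection between a bounded interval
and an unbounded interval of branches of the underlying tree. -/
def NB (L : FirstOrder.Language.{u, u}) (M : Type u) [L.Structure M] (r : L.Relations 3) :
    Prop :=
  ∀ (c d : M) (S : Set (Fin 2 → M)), Set.Definable (univ : Set M) L S →
    ∀ I J : Set (Set M),
      IsBoundedInterval (interpC L M r) c I →
      IsUnboundedInterval (interpC L M r) d J →
      ¬ CodesBijectionBetween (interpC L M r) S c d I J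

/-- An infinite group definable in `M`: an infinite definable `G ⊆ Mⁿ`
together with a definable subset of `M^{3n}` which is the graph of a group
operation on `G`. -/
def DefinableInfiniteGroup (L : FirstOrder.Language.{u, u}) (M : Type u)
    [L.Structure M] : Prop :=
  ∃ (n : ℕ) (G : Set (Fin n → M)) (mul : (Fin n → M) → (Fin n → M) → Fin n → M)
    (one : Fin n → M) (inv : (Fin n → M) → Fin n → M),
    Set.Definable (univ : Set M) L G ∧ G.Infinite ∧
    Set.Definable (univ : Set M) L
      {t : (Fin n ⊕ (Fin n ⊕ Fin n)) → M |
        t ∘ Sum.inl ∈ G ∧ t ∘ Sum.inr ∘ Sum.inl ∈ G ∧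
          mul (t ∘ Sum.inl) (t ∘ Sum.inr ∘ Sum.inl) = t ∘ Sum.inr ∘ Sum.inr} ∧
    one ∈ G ∧ (∀ a ∈ G, ∀ b ∈ G, mul a b ∈ G) ∧
    (∀ a ∈ G, ∀ b ∈ G, ∀ c ∈ G, mul (mul a b) c = mul a (mul b c)) ∧
    (∀ a ∈ G, mul one a = a ∧ mul a one = a) ∧
    (∀ a ∈ G, inv a ∈ G ∧ mul a (inv a) = one ∧ mul (inv a) a = one)

/-- `g` is a C-isomorphism from `A` onto `B`. -/
def CIsoOn (C : M → M → M → Prop) (A B : Set M) (g : M → M) : Prop :=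
  Set.BijOn g A B ∧ ∀ x ∈ A, ∀ y ∈ A, ∀ z ∈ A, (C x y z ↔ C (g x) (g y) (g z))

/-- The relation `C_e(f,g,h)`. -/
def CeRel (C : M → M → M → Prop) (V : Set M) (e : M) (f g h : M → M) : Prop :=
  ∃ W : Set M, IsCone C W ∧ e ∈ W ∧ W ⊆ V ∧ ∀ x ∈ W \ {e}, C (f x) (g x) (h x)

/-- The relation `(¬C)_e(f,g,h)`. -/
def NCeRel (C : M → M → M → Prop) (V : Set M) (e : M) (f g h : M → M) : Prop :=
  ∃ W : Set M, IsCone C W ∧ e ∈ W ∧ W ⊆ V ∧ ∀ x ∈ W \ {e}, ¬ C (f x) (g x) (h x)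

/-- A function is definable on `V` if its graph over `V` is definable. -/
def DefinableFunOn (L : FirstOrder.Language.{u, u}) (M : Type u) [L.Structure M]
    (V : Set M) (g : M → M) : Prop :=
  Set.Definable (univ : Set M) L {t : Fin 2 → M | t 0 ∈ V ∧ g (t 0) = t 1}

/-- A nice family of functions `{f u : u ∈ U}` on the cone `V`, with absorbing
element `e`. -/
structure NiceFamily (L : FirstOrder.Language.{u, u}) (M : Type u) [L.Structure M]
    (C : M → M → M → Prop) where
  U : Set M
  V : Set M
  e : M
  f : M → M → M
  coneU : IsCone C U
  coneV : IsCone C V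
  he : e ∈ V
  definable : Set.Definable (univ : Set M) L
    {t : Fin 3 → M | t 0 ∈ U ∧ t 1 ∈ V ∧ f (t 0) (t 1) = t 2}
  auto : ∀ u ∈ U, CIsoOn C V V (f u)
  fixe : ∀ u ∈ U, f u e = e
  star : ∀ x ∈ V \ {e}, ∃ V' : Set M, V' ⊆ V ∧ IsCone C V' ∧
    CIsoOn C U V' fun u => f u x

namespace NiceFamily

variable {L : FirstOrder.Language.{u, u}} [L.Structure M] {C : M → M → M → Prop}

/-- `f u` is tangent to `g` relatively to the family. -/
def Tangent (F : NiceFamily L M C) (u : M) (g : M → M) : Prop :=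
  u ∈ F.U ∧ ∀ u' ∈ F.U, NCeRel C F.V F.e (F.f u) (F.f u') g

/-- The set `T_g` of indices of tangents to `g`. -/
def Tset (F : NiceFamily L M C) (g : M → M) : Set M := {u | F.Tangent u g}

/-- The set `Γ_{g,u}`. -/
def Gamma (F : NiceFamily L M C) (g : M → M) (u : M) : Set M :=
  {y | y ∈ F.U ∧ CeRel C F.V F.e (F.f u) (F.f y) g}

/-- `g` is derivable relatively to the family: it has exactly one tangent. -/
def Derivable (F : NiceFamily L M C) (g : M → M) : Prop := ∃! u, F.Tangent u g

/-- `f u` is non-dilating. -/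
def NonDilating (F : NiceFamily L M C) (u : M) : Prop :=
  NCeRel C F.V F.e (fun x => F.f u (F.f u x)) (F.f u) id

/-- `u₀` is an identity element for the family. -/
def HasIdentity (F : NiceFamily L M C) (u₀ : M) : Prop :=
  u₀ ∈ F.U ∧ ∀ x ∈ F.V, F.f u₀ x = x

end NiceFamily

/-- Continuity on `A` with respect to the topology generated by the cones. -/
def ContinuousOnCones (C : M → M → M → Prop) (A : Set M) (g : M → M) : Prop :=
  ∀ x ∈ A, ∀ W : Set M, IsCone C W → g x ∈ W →
    ∃ W' : Set M, IsCone C W' ∧ x ∈ W' ∧ ∀ y ∈ W' ∩ A, g y ∈ W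

namespace IsCRelation

variable {C : M → M → M → Prop}

theorem apart (hC : IsCRelation C) {x y : M} (hxy : x ≠ y) : C x y y := by
  obtain ⟨c1, c2, c3, c4⟩ := hC
  obtain ⟨z, -, hz⟩ := c4 x y hxy
  grind

theorem ne_of_left (hC : IsCRelation C) {x y z : M} (h : C x y z) : x ≠ y := by
  obtain ⟨c1, c2, c3, -⟩ := hC
  grind

/-- A cone containing `e` has a point other than `e`. -/
theorem exists_mem_cone_ne (hC : IsCRelation C) {W : Set M} (hW : IsCone C W) {e : M}
    (he : e ∈ W) : ∃ x ∈ W, x ≠ e := by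
  obtain ⟨a, b, -, rfl⟩ := hW
  have hae : a ≠ e := hC.ne_of_left he
  obtain ⟨c1, c2, c3, c4⟩ := hC
  obtain ⟨z, hz, hz'⟩ := c4 a e hae
  refine ⟨z, ?_, hz⟩
  simp only [mem_ofPred_eq] at he ⊢
  grind

/-- Two cones containing `e` are comparable. -/
theorem cone_subset_or_subset (hC : IsCRelation C) {W W' : Set M} (hW : IsCone C W)
    (hW' : IsCone C W') {e : M} (he : e ∈ W) (he' : e ∈ W') : W ⊆ W' ∨ W' ⊆ W := by
  obtain ⟨a, b, -, rfl⟩ := hW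
  obtain ⟨a', b', -, rfl⟩ := hW'
  obtain ⟨c1, c2, c3, -⟩ := hC
  simp only [mem_ofPred_eq] at he he'
  by_cases h : C a e a'
  · right
    intro x hx
    simp only [mem_ofPred_eq] at hx ⊢
    have h₁ : C a' x e := by grind
    have h₂ : C a x e := by grind
    grind
  · left
    intro x hx
    simp only [mem_ofPred_eq] at hx ⊢
    have h₁ : C a x e := by grind
    have h₂ : C a' x e := by grind
    grind

theorem exists_cone_subset_inter (hC : IsCRelation C) {W W' : Set M} (hW : IsCone C W)
    (hW' : IsCone C W') {e : M} (he : e ∈ W) (he' : e ∈ W') :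
    ∃ W'', IsCone C W'' ∧ e ∈ W'' ∧ W'' ⊆ W ∧ W'' ⊆ W' := by
  rcases hC.cone_subset_or_subset hW hW' he he' with h | h
  · exact ⟨W, hW, he, Subset.rfl, h⟩
  · exact ⟨W', hW', he', h, Subset.rfl⟩

/-- Every cone around `e` shrinks to a cone around `e` that is separated from a given finite set. -/
theorem exists_cone_apart (hC : IsCRelation C) {V : Set M} (hV : IsCone C V) {e : M} (he : e ∈ V)
    {P : Set M} (hP : P.Finite) :
    ∃ W, IsCone C W ∧ e ∈ W ∧ W ⊆ V ∧ ∀ p ∈ P, p ≠ e → ∀ x ∈ W, C p x e := by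
  induction P, hP using Set.Finite.induction_on with
  | empty => exact ⟨V, hV, he, Subset.rfl, by simp⟩
  | @insert p s _ _ ih =>
    obtain ⟨W, hW, heW, hWV, h⟩ := ih
    by_cases hpe : p = e
    · exact ⟨W, hW, heW, hWV, by grind⟩
    · have hp : e ∈ {x | C p x e} := hC.apart hpe
      obtain ⟨W', hW', heW', h₁, h₂⟩ :=
        hC.exists_cone_subset_inter hW ⟨p, e, hpe, rfl⟩ heW hp
      refine ⟨W', hW', heW', h₁.trans hWV, ?_⟩
      intro q hq hqe x hx
      rcases hq with rfl | hq
      · exact h₂ hx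
      · exact h q hq hqe x (h₁ hx)

end IsCRelation

namespace QFDef

variable {C : M → M → M → Prop}

/-- Membership in a quantifier-free definable set depends only on the `C`-relations with finitely
many parameters. -/
theorem exists_params (hC : IsCRelation C) {D : Set M} (hD : QFDef C D) :
    ∃ P : Set M, P.Finite ∧ ∀ z w, (∀ p ∈ P, p ≠ z ∧ p ≠ w) →
      (∀ p ∈ P, ∀ q ∈ P, (C z p q ↔ C w p q) ∧ (C p z q ↔ C p w q)) → (z ∈ D ↔ w ∈ D) := by
  induction hD with
  | atomC t₁ t₂ t₃ =>
    refine ⟨{p | t₁ = some p} ∪ {p | t₂ = some p} ∪ {p | t₃ = some p}, ?_, ?_⟩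
    · refine Set.Finite.union (Set.Finite.union ?_ ?_) ?_ <;>
        exact Set.Subsingleton.finite fun p hp q hq => by simp_all
    · have hap := fun x y => @IsCRelation.apart M C hC x y
      obtain ⟨c1, c2, c3, -⟩ := hC
      intro z w hne h
      cases t₁ <;> cases t₂ <;> cases t₃ <;>
        simp only [mem_ofPred_eq, mem_union, Option.getD_some, Option.getD_none, Option.some.injEq,
          reduceCtorEq, or_false, false_or] at hne h ⊢ <;> grind
  | atomEq t₁ t₂ =>
    refine ⟨{p | t₁ = some p} ∪ {p | t₂ = some p}, ?_, ?_⟩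
    · refine Set.Finite.union ?_ ?_ <;>
        exact Set.Subsingleton.finite fun p hp q hq => by simp_all
    · intro z w hne h
      cases t₁ <;> cases t₂ <;>
        simp only [mem_ofPred_eq, mem_union, Option.getD_some, Option.getD_none, Option.some.injEq,
          reduceCtorEq, or_false, false_or] at hne h ⊢ <;> grind
  | compl _ ih =>
    obtain ⟨P, hP, h⟩ := ih
    exact ⟨P, hP, fun z w h₁ h₂ => not_congr (h z w h₁ h₂)⟩
  | union _ _ ih₁ ih₂ =>
    obtain ⟨P, hP, h⟩ := ih₁
    obtain ⟨Q, hQ, h'⟩ := ih₂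
    refine ⟨P ∪ Q, hP.union hQ, fun z w h₁ h₂ => or_congr (h z w ?_ ?_) (h' z w ?_ ?_)⟩
    · exact fun p hp => h₁ p (.inl hp)
    · exact fun p hp q hq => h₂ p (.inl hp) q (.inl hq)
    · exact fun p hp => h₁ p (.inr hp)
    · exact fun p hp q hq => h₂ p (.inr hp) q (.inr hq)

/-- A quantifier-free definable set contains or avoids a punctured cone around any point. -/
theorem eventually_const (hC : IsCRelation C) {D : Set M} (hD : QFDef C D) {V : Set M}
    (hV : IsCone C V) {e : M} (he : e ∈ V) :
    ∃ W, IsCone C W ∧ e ∈ W ∧ W ⊆ V ∧ ((∀ x ∈ W \ {e}, x ∈ D) ∨ ∀ x ∈ W \ {e}, x ∉ D) := by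
  obtain ⟨P, hP, h⟩ := hD.exists_params hC
  obtain ⟨W, hW, heW, hWV, hPW⟩ := hC.exists_cone_apart hV he (hP.insert e)
  refine ⟨W, hW, heW, hWV, ?_⟩
  have hap := fun x y => @IsCRelation.apart M C hC x y
  obtain ⟨x₀, hx₀, hne⟩ := hC.exists_mem_cone_ne hW heW
  have key : ∀ x ∈ W \ {e}, (x ∈ D ↔ x₀ ∈ D) := by
    intro x hx
    obtain ⟨c1, c2, c3, -⟩ := hC
    have hxe : x ≠ e := hx.2
    have hP' : ∀ p ∈ P, p = e ∨ C p x e ∧ C p x₀ e := fun p hp => by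
      by_cases hpe : p = e
      · exact .inl hpe
      · exact .inr ⟨hPW p (.inr hp) hpe x hx.1, hPW p (.inr hp) hpe x₀ hx₀⟩
    refine h x x₀ (fun p hp => ?_) (fun p hp q hq => ?_)
    · rcases hP' p hp with rfl | hp
      · exact ⟨hxe.symm, hne.symm⟩
      · constructor <;> rintro rfl <;> grind
    · have h₁ := hap x e hxe
      have h₂ := hap x₀ e hne
      have h₃ := hap e x hxe.symm
      have h₄ := hap e x₀ hne.symm
      rcases hP' p hp with rfl | hp <;> rcases hP' q hq with rfl | hq <;> grind
  by_cases hx : x₀ ∈ D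
  · exact .inl fun x hx' => (key x hx').2 hx
  · exact .inr fun x hx' hxD => hx ((key x hx').1 hxD)

/-- A quantifier-free definable set cannot contain and avoid infinitely many cones at the same
node. -/
theorem false_of_cones (hC : IsCRelation C) {D : Set M} (hD : QFDef C D) {a b : M} (hab : a ≠ b)
    {s t : ℕ → M} (hs : ∀ i, s i ∈ node C a b) (ht : ∀ i, t i ∈ node C a b)
    (hss : ∀ i j, i ≠ j → ¬ C a (s i) (s j) ∧ ¬ C b (s i) (s j))
    (htt : ∀ i j, i ≠ j → ¬ C a (t i) (t j) ∧ ¬ C b (t i) (t j))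
    (hsD : ∀ i, s i ∈ D) (htD : ∀ i, t i ∉ D) : False := by
  obtain ⟨P, hP, h⟩ := hD.exists_params hC
  have avoid : ∀ s : ℕ → M, (∀ i, s i ∈ node C a b) →
      (∀ i j, i ≠ j → ¬ C a (s i) (s j) ∧ ¬ C b (s i) (s j)) →
      ∃ i, ∀ p ∈ P, ¬ C a p (s i) ∧ ¬ C b p (s i) := by
    intro s hs hss
    by_contra! hcon
    choose f hfP hf using hcon
    obtain ⟨i, -, j, -, hij, hfij⟩ :=
      Set.infinite_univ.exists_ne_map_eq_of_mapsTo (fun i _ => hfP i) hP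
    have hi := hf i
    have hj := hf j
    have hij' := hss i j hij
    have h₁ := hs i
    have h₂ := hs j
    rw [← hfij] at hj
    simp only [node, mem_ofPred_eq] at h₁ h₂
    obtain ⟨c1, c2, c3, -⟩ := hC
    generalize f i = p at *
    generalize s i = z at *
    generalize s j = w at *
    clear h hss htt hsD htD hs ht hf hfP
    by_cases hi' : C a p z <;> by_cases hj' : C a p w <;> grind
  obtain ⟨i, hi⟩ := avoid s hs hss
  obtain ⟨j, hj⟩ := avoid t ht htt
  refine htD j ((h (s i) (t j) ?_ ?_).1 (hsD i))
  · intro p hp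
    have hap := fun x y => @IsCRelation.apart M C hC x y
    have hi := hi p hp
    have hj := hj p hp
    constructor <;> rintro rfl <;> grind
  · intro p hp q hq
    have hip := hi p hp
    have hiq := hi q hq
    have hjp := hj p hp
    have hjq := hj q hq
    have h₁ := hs i
    have h₂ := ht j
    have hab' := hC.apart hab
    simp only [node, mem_ofPred_eq] at h₁ h₂
    obtain ⟨c1, c2, c3, -⟩ := hC
    generalize s i = z at *
    generalize t j = w at *
    have hzw : ¬ C z w p ∧ ¬ C w z p ∧ ¬ C z w q ∧ ¬ C w z q := by
      clear h hss htt hsD htD hs ht hi hj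
      refine ⟨?_, ?_, ?_, ?_⟩ <;> intro hh <;> grind
    clear h hss htt hsD htD hs ht hi hj
    constructor <;> constructor <;> intro hh <;> grind

/-- A nonempty proper quantifier-free definable set that contains the node of any two of its
points is a ball. -/
theorem isBall (hC : IsCRelation C) {T : Set M} (hT : QFDef C T)
    (hconv : ∀ u ∈ T, ∀ v ∈ T, node C u v ⊆ T) (hne : T.Nonempty) (hne' : Tᶜ.Nonempty) :
    IsBall C T := by
  obtain ⟨u, hu⟩ := hne
  obtain ⟨w₀, hw₀⟩ := hne'
  by_contra hball
  have hout : ∀ w ∉ T, ∀ z ∈ T, C w z u := by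
    intro w hw z hz
    by_contra hc
    exact hw (hconv z hz u hu hc)
  have hup : ∀ v ∈ T, ∃ v' ∈ T, C v' u v := by
    intro v hv
    by_contra! hc
    exact hball (.inr ⟨u, v, Subset.antisymm hc (hconv u hu v hv)⟩)
  have hdown : ∀ w ∉ T, ∃ w' ∉ T, C w w' u := by
    intro w hw
    by_contra! hc
    refine hball (.inl ⟨w, u, fun h => hw (h ▸ hu), Subset.antisymm (hout w hw) ?_⟩)
    intro z hz
    by_contra hzT
    exact hc z hzT hz
  obtain ⟨P, hP, h⟩ := hT.exists_params hC
  have hin : ∃ v ∈ T, ∀ p ∈ P, p ∈ T → ¬ C p u v := by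
    clear h
    induction P, hP using Set.Finite.induction_on with
    | empty => exact ⟨u, hu, by simp⟩
    | @insert p s _ _ ih =>
      obtain ⟨v, hv, ih⟩ := ih
      by_cases hc : p ∈ T ∧ C p u v
      · refine ⟨p, hc.1, ?_⟩
        obtain ⟨c1, c2, c3, -⟩ := hC
        rintro q (rfl | hq) hqT
        · grind
        · have := ih q hq hqT
          have := hc.2
          grind
      · exact ⟨v, hv, by grind⟩
  have hex : ∃ w ∉ T, ∀ p ∈ P, p ∉ T → ¬ C w p u := by
    clear h hin
    induction P, hP using Set.Finite.induction_on with
    | empty => exact ⟨w₀, hw₀, by simp⟩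
    | @insert p s _ _ ih =>
      obtain ⟨w, hw, ih⟩ := ih
      by_cases hc : p ∉ T ∧ C w p u
      · refine ⟨p, hc.1, ?_⟩
        obtain ⟨c1, c2, c3, -⟩ := hC
        rintro q (rfl | hq) hqT
        · grind
        · have := ih q hq hqT
          have := hc.2
          grind
      · exact ⟨w, hw, by grind⟩
  obtain ⟨v, hv, hin⟩ := hin
  obtain ⟨w, hw, hex⟩ := hex
  obtain ⟨v', hv', hvv'⟩ := hup v hv
  obtain ⟨w', hw', hww'⟩ := hdown w hw
  have hw'v' := hout w' hw' v' hv'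
  have hinP : ∀ p ∈ P, p ∈ T → C v' u p ∧ C w' u p := by
    intro p hp hpT
    have h₁ := hin p hp hpT
    have h₂ := hout w' hw' p hpT
    obtain ⟨c1, c2, c3, -⟩ := hC
    clear hout hup hdown h hin hex hconv
    grind
  have hexP : ∀ p ∈ P, p ∉ T → C p v' u ∧ C p w' u := by
    intro p hp hpT
    have h₁ := hex p hp hpT
    have h₂ := hout p hpT v' hv'
    obtain ⟨c1, c2, c3, -⟩ := hC
    clear hout hup hdown h hin hex hconv
    grind
  refine hw' ((h v' w' ?_ ?_).1 hv')
  · intro p hp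
    obtain ⟨c1, c2, c3, -⟩ := hC
    by_cases hpT : p ∈ T
    · have := hinP p hp hpT
      clear hout hup hdown h hin hex hconv
      constructor <;> rintro rfl <;> grind
    · have := hexP p hp hpT
      clear hout hup hdown h hin hex hconv
      constructor <;> rintro rfl <;> grind
  · intro p hp q hq
    have hp' : (C v' u p ∧ C w' u p) ∨ (C p v' u ∧ C p w' u) := by
      by_cases hpT : p ∈ T
      · exact .inl (hinP p hp hpT)
      · exact .inr (hexP p hp hpT)
    have hq' : (C v' u q ∧ C w' u q) ∨ (C q v' u ∧ C q w' u) := by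
      by_cases hqT : q ∈ T
      · exact .inl (hinP q hq hqT)
      · exact .inr (hexP q hq hqT)
    obtain ⟨c1, c2, c3, -⟩ := hC
    clear hout hup hdown h hin hex hconv hinP hexP
    rcases hp' with hp' | hp' <;> rcases hq' with hq' | hq' <;>
      constructor <;> constructor <;> intro hh <;> grind

end QFDef

section Ultrapower

variable {L : FirstOrder.Language.{u, u}} [L.Structure M] {r : L.Relations 3}

theorem interpC_ultrapower [Nonempty M] (l : Ultrafilter ℕ) (x y z : ℕ → M) :
    interpC L ((l : Filter ℕ).Product fun _ => M) r x y z ↔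
      ∀ᶠ i in l, interpC L M r (x i) (y i) (z i) := by
  have h := Language.Ultraproduct.realize_formula_cast (L := L) (u := l) (M := fun _ => M)
    (r.formula fun i : Fin 3 => Language.Term.var i) ![x, y, z]
  simp only [Language.Formula.realize_rel, Language.Term.realize_var] at h
  unfold interpC
  convert! h using 2
  · ext i; fin_cases i <;> rfl
  · refine funext fun n => congrArg (Language.Structure.RelMap r) (funext fun i => ?_)
    fin_cases i <;> rfl

theorem isCRelation_ultrapower [Nonempty M] (l : Ultrafilter ℕ)
    (hC : IsCRelation (interpC L M r)) :
    IsCRelation (interpC L ((l : Filter ℕ).Product fun _ => M) r) := by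
  obtain ⟨c1, c2, c3, c4⟩ := hC
  refine ⟨?_, ?_, ?_, ?_⟩
  · rintro ⟨x⟩ ⟨y⟩ ⟨z⟩ h
    refine (interpC_ultrapower l x z y).2 ?_
    filter_upwards [(interpC_ultrapower l x y z).1 h] with i using c1 _ _ _
  · rintro ⟨x⟩ ⟨y⟩ ⟨z⟩ h h'
    obtain ⟨i, hi, hi'⟩ :=
      (((interpC_ultrapower l x y z).1 h).and ((interpC_ultrapower l y x z).1 h')).exists
    exact c2 _ _ _ hi hi'
  · rintro ⟨x⟩ ⟨y⟩ ⟨z⟩ ⟨w⟩ h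
    have h' : ∀ᶠ i in l, interpC L M r (x i) (w i) (z i) ∨ interpC L M r (w i) (y i) (z i) := by
      filter_upwards [(interpC_ultrapower l x y z).1 h] with i using c3 _ _ _ _
    exact (Ultrafilter.eventually_or.1 h').imp (interpC_ultrapower l x w z).2
      (interpC_ultrapower l w y z).2
  · rintro ⟨x⟩ ⟨y⟩ hxy
    have hne : ∀ᶠ i in l, x i ≠ y i :=
      Ultrafilter.eventually_not.2 fun h => hxy (Quotient.sound h)
    have hz : ∀ i, ∃ z, x i ≠ y i → z ≠ y i ∧ interpC L M r (x i) (y i) z := by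
      intro i
      by_cases h : x i = y i
      · exact ⟨x i, fun h' => (h' h).elim⟩
      · obtain ⟨z, hz⟩ := c4 _ _ h
        exact ⟨z, fun _ => hz⟩
    choose z hz using hz
    refine ⟨Quotient.mk _ z, fun h => ?_, (interpC_ultrapower l x y z).2 ?_⟩
    · have h' : ∀ᶠ i in l, z i = y i := Quotient.exact h
      obtain ⟨i, hi, hi'⟩ := (hne.and h').exists
      exact (hz i hi).1 hi'
    · filter_upwards [hne] with i hi using (hz i hi).2

/-- In a C-minimal structure, no definable family of sets cuts the tails out of an infinite
sequence of distinct cones at a node. -/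
theorem CMinimal.false_of_tails (hC : IsCRelation (interpC L M r)) (hmin : CMinimal L M r)
    {S : Set (Fin 2 → M)} (hS : Set.Definable (univ : Set M) L S) {a b : M} (hab : a ≠ b)
    {t z : ℕ → M} (hz : ∀ i, z i ∈ node (interpC L M r) a b)
    (hzz : ∀ i j, i < j → ¬ interpC L M r a (z i) (z j) ∧ ¬ interpC L M r b (z i) (z j))
    (hin : ∀ n i, n ≤ i → ![z i, t n] ∈ S) (hout : ∀ n i, i < n → ![z i, t n] ∉ S) : False := by
  have hzz' : ∀ i j, i ≠ j → ¬ interpC L M r a (z i) (z j) ∧ ¬ interpC L M r b (z i) (z j) := by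
    intro i j hij
    rcases hij.lt_or_gt with h | h
    · exact hzz i j h
    · exact (hzz j i h).imp (mt (hC.1 _ _ _)) (mt (hC.1 _ _ _))
  have : Nonempty M := ⟨a⟩
  obtain ⟨φ, rfl⟩ := Set.definable_iff_exists_formula_sum.1 hS
  let l : Ultrafilter ℕ := Filter.hyperfilter ℕ
  have hl : ∀ n : ℕ, ∀ᶠ i in l, n ≤ i := fun n =>
    (Filter.eventually_ge_atTop n).filter_mono (Nat.hyperfilter_le_atTop)
  let N := (l : Filter ℕ).Product fun _ => M
  let mk : (ℕ → M) → N := fun x => Quotient.mk _ x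
  have hcast : ∀ y : ℕ → M,
      (φ.Realize (Sum.elim (fun p => mk fun _ => (p : M)) ![mk y, mk t])) ↔
        ∀ᶠ n in l, φ.Realize (Sum.elim (↑) ![y n, t n]) := by
    intro y
    have h := Language.Ultraproduct.realize_formula_cast (L := L) (u := l) (M := fun _ => M) φ
      (Sum.elim (fun p _ => (p : M)) ![y, t])
    convert! h using 2
    · ext i
      rcases i with i | i
      · rfl
      · fin_cases i <;> rfl
    · refine funext fun n => congrArg φ.Realize (funext fun i => ?_)
      rcases i with i | i
      · rfl
      · fin_cases i <;> rfl
  have hMN : L.ElementarilyEquivalent M N := by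
    refine Language.elementarilyEquivalent_iff.2 fun ψ => ?_
    have := Language.Ultraproduct.sentence_realize (L := L) (u := l) (M := fun _ => M) ψ
    rw [this, Filter.eventually_const]
  let D : Set N := {y | φ.Realize (Sum.elim (fun p => mk fun _ => (p : M)) ![y, mk t])}
  have hD : Set.Definable₁ (univ : Set N) L D := by
    refine Set.definable_iff_exists_formula_sum.2 ⟨φ.relabel (Sum.elim
      (fun p : (univ : Set M) => Sum.inl ⟨mk fun _ => (p : M), trivial⟩)
      ![Sum.inr 0, Sum.inl ⟨mk t, trivial⟩]), ?_⟩
    ext v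
    simp only [D, mem_ofPred_eq, Language.Formula.realize_relabel]
    rw [iff_iff_eq]
    refine congrArg φ.Realize (funext fun i => ?_)
    rcases i with i | i
    · rfl
    · fin_cases i <;> rfl
  have hQ := hmin N inferInstance hMN D hD
  refine hQ.false_of_cones (isCRelation_ultrapower l hC) (a := mk fun _ => a) (b := mk fun _ => b)
    (s := fun i => mk fun n => z (n + i)) (t := fun i => mk fun _ => z i) ?_ ?_ ?_ ?_ ?_ ?_ ?_
  · intro h
    have h' : ∀ᶠ _ in (l : Filter ℕ), a = b := Quotient.exact h
    exact hab (h'.exists.choose_spec)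
  · intro i h
    obtain ⟨n, hn⟩ := ((interpC_ultrapower l _ _ _).1 h).exists
    exact hz _ hn
  · intro i h
    obtain ⟨n, hn⟩ := ((interpC_ultrapower l _ _ _).1 h).exists
    exact hz _ hn
  · intro i j hij
    constructor <;> intro h <;> obtain ⟨n, hn⟩ := ((interpC_ultrapower l _ _ _).1 h).exists
    · exact (hzz' _ _ (by omega)).1 hn
    · exact (hzz' _ _ (by omega)).2 hn
  · intro i j hij
    constructor <;> intro h <;> obtain ⟨n, hn⟩ := ((interpC_ultrapower l _ _ _).1 h).exists
    · exact (hzz' _ _ hij).1 hn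
    · exact (hzz' _ _ hij).2 hn
  · intro i
    exact (hcast _).2 (Filter.Eventually.of_forall fun n => hin n (n + i) (by omega))
  · intro i h
    obtain ⟨n, hn, hn'⟩ := (((hcast _).1 h).and (hl (i + 1))).exists
    exact hout n i hn' hn

end Ultrapower

section Definability

variable {L : FirstOrder.Language.{u, u}} [L.Structure M] {r : L.Relations 3}

theorem CMinimal.qfDef (hmin : CMinimal L M r) {s : Set M}
    (hs : Set.Definable₁ (univ : Set M) L s) : QFDef (interpC L M r) s :=
  hmin M inferInstance rfl s hs

theorem definableFun_coord {α : Type*} (i : α) :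
    (univ : Set M).DefinableFun L fun v : α → M => v i :=
  Set.DefinableFun.proj L

theorem definableFun_param {α : Type*} (a : M) :
    (univ : Set M).DefinableFun L fun _ : α → M => a :=
  L.definableFun_const α (mem_univ a)

theorem definable_interpC {α : Type*} {f₁ f₂ f₃ : (α → M) → M}
    (h₁ : (univ : Set M).DefinableFun L f₁) (h₂ : (univ : Set M).DefinableFun L f₂)
    (h₃ : (univ : Set M).DefinableFun L f₃) :
    (univ : Set M).Definable L {v | interpC L M r (f₁ v) (f₂ v) (f₃ v)} := by
  have h : (univ : Set M).Definable L {v : Fin 3 → M | Language.Structure.RelMap r v} := by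
    refine Set.Definable.mono (A := ∅) (Set.empty_definable_iff.2
      ⟨r.formula fun i : Fin 3 => Language.Term.var i, ?_⟩) (empty_subset _)
    ext v
    simp [Language.Formula.realize_rel]
  refine Set.Definable.preimage_map (F := fun v => ![f₁ v, f₂ v, f₃ v]) ?_ h
  intro i
  fin_cases i <;> assumption

theorem definable_mem_cone {α : Type*} {U : Set M} (hU : IsCone (interpC L M r) U)
    {f : (α → M) → M} (hf : (univ : Set M).DefinableFun L f) :
    (univ : Set M).Definable L {v | f v ∈ U} := by
  obtain ⟨a, b, -, rfl⟩ := hU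
  exact definable_interpC (definableFun_param a) hf (definableFun_param b)

theorem definable_eq {α : Type*} {f₁ f₂ : (α → M) → M}
    (h₁ : (univ : Set M).DefinableFun L f₁) (h₂ : (univ : Set M).DefinableFun L f₂) :
    (univ : Set M).Definable L {v | f₁ v = f₂ v} := by
  refine Set.Definable.preimage_map (F := fun v => ![f₁ v, f₂ v]) ?_
    (Set.Definable.diagonal L (univ : Set M))
  intro i
  fin_cases i <;> assumption

theorem definable_exists {n : ℕ} {P : (Fin n → M) → M → Prop}
    (h : (univ : Set M).Definable L {v : Fin (n + 1) → M | P (fun i => v i.castSucc) (v (Fin.last n))}) :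
    (univ : Set M).Definable L {v : Fin n → M | ∃ x, P v x} := by
  convert! h.image_comp (Fin.castSucc : Fin n → Fin (n + 1)) using 1
  ext v
  constructor
  · rintro ⟨x, hx⟩
    refine ⟨Fin.snoc v x, ?_, ?_⟩
    · simpa using hx
    · ext i; simp
  · rintro ⟨w, hw, rfl⟩
    exact ⟨_, hw⟩

end Definability

/-- `p` holds on a punctured cone around `e` contained in `V`. -/
def Near (C : M → M → M → Prop) (V : Set M) (e : M) (p : M → Prop) : Prop :=
  ∃ W : Set M, IsCone C W ∧ e ∈ W ∧ W ⊆ V ∧ ∀ x ∈ W \ {e}, p x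

namespace Near

variable {C : M → M → M → Prop} {V : Set M} {e : M} {p q : M → Prop}

theorem mono (h : Near C V e p) (hpq : ∀ x ∈ V \ {e}, p x → q x) : Near C V e q := by
  obtain ⟨W, hW, he, hWV, hp⟩ := h
  exact ⟨W, hW, he, hWV, fun x hx => hpq x ⟨hWV hx.1, hx.2⟩ (hp x hx)⟩

theorem and (hC : IsCRelation C) (hp : Near C V e p) (hq : Near C V e q) :
    Near C V e fun x => p x ∧ q x := by
  obtain ⟨W, hW, he, hWV, hp⟩ := hp
  obtain ⟨W', hW', he', -, hq⟩ := hq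
  obtain ⟨W'', hW'', he'', h, h'⟩ := hC.exists_cone_subset_inter hW hW' he he'
  exact ⟨W'', hW'', he'', h.trans hWV, fun x hx => ⟨hp x ⟨h hx.1, hx.2⟩, hq x ⟨h' hx.1, hx.2⟩⟩⟩

theorem exists_mem (hC : IsCRelation C) (hp : Near C V e p) : ∃ x ∈ V \ {e}, p x := by
  obtain ⟨W, hW, he, hWV, hp⟩ := hp
  obtain ⟨x, hx, hxe⟩ := hC.exists_mem_cone_ne hW he
  exact ⟨x, ⟨hWV hx, hxe⟩, hp x ⟨hx, hxe⟩⟩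

theorem forall_mem_finset (hC : IsCRelation C) (hV : IsCone C V) (he : e ∈ V) {ι : Type*}
    {p : ι → M → Prop} (s : Finset ι) (h : ∀ i ∈ s, Near C V e (p i)) :
    Near C V e fun x => ∀ i ∈ s, p i x := by
  classical
  induction s using Finset.induction_on with
  | empty => exact ⟨V, hV, he, Subset.rfl, by simp⟩
  | insert i s _ ih =>
    refine (and hC (h i (by simp)) (ih fun j hj => h j (by simp [hj]))).mono fun x _ hx => ?_
    simpa using hx

end Near

namespace NiceFamily

variable {L : FirstOrder.Language.{u, u}} [L.Structure M]

section Definability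

variable {r : L.Relations 3} (F : NiceFamily L M (interpC L M r)) {g : M → M}

theorem definable_interpC_apply (hg : DefinableFunOn L M F.V g) {α : Type*}
    {h₁ h₂ h₃ : (α → M) → M} (hh₁ : (univ : Set M).DefinableFun L h₁)
    (hh₂ : (univ : Set M).DefinableFun L h₂) (hh₃ : (univ : Set M).DefinableFun L h₃) :
    (univ : Set M).Definable L {v : α → M | h₁ v ∈ F.U ∧ h₂ v ∈ F.U ∧ h₃ v ∈ F.V ∧
      interpC L M r (F.f (h₁ v) (h₃ v)) (F.f (h₂ v) (h₃ v)) (g (h₃ v))} := by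
  have key : (univ : Set M).Definable L {v : Fin 3 → M | v 0 ∈ F.U ∧ v 1 ∈ F.U ∧ v 2 ∈ F.V ∧
      interpC L M r (F.f (v 0) (v 2)) (F.f (v 1) (v 2)) (g (v 2))} := by
    have h := (((F.definable.preimage_comp ![(0 : Fin 6), 2, 3]).inter
      (F.definable.preimage_comp ![(1 : Fin 6), 2, 4])).inter
      (hg.preimage_comp ![(2 : Fin 6), 5])).inter
      (definable_interpC (r := r) (definableFun_coord 3) (definableFun_coord 4)
        (definableFun_coord 5))
    convert! h.image_comp ![(0 : Fin 6), 1, 2] using 1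
    ext v
    constructor
    · rintro ⟨h₀, h₁, h₂, hc⟩
      refine ⟨![v 0, v 1, v 2, F.f (v 0) (v 2), F.f (v 1) (v 2), g (v 2)],
        ⟨⟨⟨⟨h₀, h₂, rfl⟩, ⟨h₁, h₂, rfl⟩⟩, ⟨h₂, rfl⟩⟩, hc⟩, ?_⟩
      ext i
      fin_cases i <;> rfl
    · rintro ⟨w, ⟨⟨⟨⟨h₀, h₂, h₃⟩, ⟨h₁, -, h₄⟩⟩, ⟨-, h₅⟩⟩, hc⟩, rfl⟩
      refine ⟨h₀, h₁, h₂, ?_⟩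
      rw [mem_ofPred_eq] at hc
      rwa [← show _ = w 3 from h₃, ← show _ = w 4 from h₄, ← show _ = w 5 from h₅] at hc
  refine Set.Definable.preimage_map (F := fun v => ![h₁ v, h₂ v, h₃ v]) ?_ key
  intro i
  fin_cases i <;> assumption

/-- Near the absorbing element, the position of `g` relative to two members of the family is
constant. -/
theorem near_or_near_not (hC : IsCRelation (interpC L M r)) (hmin : CMinimal L M r)
    (hg : DefinableFunOn L M F.V g) {u v : M} (hu : u ∈ F.U) (hv : v ∈ F.U) :
    Near (interpC L M r) F.V F.e (fun x => interpC L M r (F.f u x) (F.f v x) (g x)) ∨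
      Near (interpC L M r) F.V F.e (fun x => ¬ interpC L M r (F.f u x) (F.f v x) (g x)) := by
  have hD : Set.Definable₁ (univ : Set M) L {x | u ∈ F.U ∧ v ∈ F.U ∧ x ∈ F.V ∧
      interpC L M r (F.f u x) (F.f v x) (g x)} :=
    F.definable_interpC_apply hg (definableFun_param u) (definableFun_param v)
      (definableFun_coord 0)
  obtain ⟨W, hW, he, hWV, h | h⟩ := (hmin.qfDef hD).eventually_const hC F.coneV F.he
  · exact .inl ⟨W, hW, he, hWV, fun x hx => (h x hx).2.2.2⟩
  · exact .inr ⟨W, hW, he, hWV, fun x hx hc => h x hx ⟨hu, hv, hWV hx.1, hc⟩⟩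

/-- The set of `v` with `f v` eventually not `C`-separated from `f u` and `g` is definable. -/
theorem definable_near_not (hC : IsCRelation (interpC L M r)) (hg : DefinableFunOn L M F.V g)
    {u : M} (hu : u ∈ F.U) :
    Set.Definable₁ (univ : Set M) L {v | v ∈ F.U ∧
      Near (interpC L M r) F.V F.e (fun x => ¬ interpC L M r (F.f v x) (F.f u x) (g x))} := by
  have h₁ : (univ : Set M).Definable L {w : Fin 3 → M | ∃ x, x ≠ F.e ∧
      interpC L M r (w 1) x (w 2) ∧ w 0 ∈ F.U ∧ u ∈ F.U ∧ x ∈ F.V ∧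
      interpC L M r (F.f (w 0) x) (F.f u x) (g x)} := by
    refine definable_exists ?_
    exact ((definable_eq (definableFun_coord 3) (definableFun_param F.e)).compl).inter
      ((definable_interpC (definableFun_coord 1) (definableFun_coord 3)
        (definableFun_coord 2)).inter (F.definable_interpC_apply hg (definableFun_coord 0)
          (definableFun_param u) (definableFun_coord 3)))
  have h₂ := ((definable_interpC (r := r) (definableFun_coord 1) (definableFun_param F.e)
    (definableFun_coord 2)).inter h₁.compl).image_comp ![(0 : Fin 3)]
  unfold Set.Definable₁
  convert! (definable_mem_cone F.coneU (definableFun_coord (0 : Fin 1))).inter h₂ using 1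
  ext v
  constructor
  · rintro ⟨hvU, W, ⟨a, b, -, rfl⟩, he, hWV, h⟩
    refine ⟨hvU, ![v 0, a, b], ⟨he, ?_⟩, ?_⟩
    · rintro ⟨x, hxe, hx, -, -, -, hc⟩
      exact h x ⟨hx, hxe⟩ hc
    · ext i
      fin_cases i
      rfl
  · rintro ⟨hvU, w, ⟨he, h⟩, rfl⟩
    have hne : w 1 ≠ w 2 := by
      obtain ⟨c1, c2, -, -⟩ := hC
      rw [mem_ofPred_eq] at he
      intro h
      rw [← h] at he
      exact c2 _ _ _ (c1 _ _ _ he) (c1 _ _ _ he)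
    obtain ⟨W, hW, heW, h', hWV⟩ := hC.exists_cone_subset_inter ⟨w 1, w 2, hne, rfl⟩ F.coneV
      he F.he
    refine ⟨hvU, W, hW, heW, hWV, fun x hx hc => h ⟨x, hx.2, h' hx.1, hvU, hu, hWV hx.1, hc⟩⟩

end Definability

section Family

variable {C : M → M → M → Prop} (F : NiceFamily L M C)

theorem rel_apply_iff {x : M} (hx : x ∈ F.V \ {F.e}) {u v w : M} (hu : u ∈ F.U) (hv : v ∈ F.U)
    (hw : w ∈ F.U) : C (F.f u x) (F.f v x) (F.f w x) ↔ C u v w := by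
  obtain ⟨V', -, -, -, h⟩ := F.star x hx
  exact (h u hu v hv w hw).symm

theorem node_subset (hC : IsCRelation C) {u v : M} (hu : u ∈ F.U) (hv : v ∈ F.U) :
    node C u v ⊆ F.U := by
  obtain ⟨a, b, -, hU⟩ := F.coneU
  rw [hU] at hu hv ⊢
  obtain ⟨c1, c2, c3, -⟩ := hC
  intro z hz
  simp only [node, mem_ofPred_eq] at hu hv hz ⊢
  grind

theorem cone_subset (hC : IsCRelation C) {u v : M} (hu : u ∈ F.U) (hv : v ∈ F.U) :
    {z | C u z v} ⊆ F.U := by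
  obtain ⟨a, b, -, hU⟩ := F.coneU
  rw [hU] at hu hv ⊢
  obtain ⟨c1, c2, c3, -⟩ := hC
  intro z hz
  simp only [mem_ofPred_eq] at hu hv hz ⊢
  grind

end Family

section Tangent

variable {r : L.Relations 3} (F : NiceFamily L M (interpC L M r)) {g : M → M}

theorem near_of_not_tangent (hC : IsCRelation (interpC L M r)) (hmin : CMinimal L M r)
    (hg : DefinableFunOn L M F.V g) {u v : M} (hu : u ∈ F.Tset g) (hv : v ∈ F.U \ F.Tset g) :
    Near (interpC L M r) F.V F.e fun x => interpC L M r (F.f v x) (F.f u x) (g x) := by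
  obtain ⟨w, hw, hw'⟩ : ∃ w ∈ F.U, ¬ NCeRel (interpC L M r) F.V F.e (F.f v) (F.f w) g := by
    by_contra! h
    exact hv.2 ⟨hv.1, h⟩
  have h := (F.near_or_near_not hC hmin hg hv.1 hw).resolve_right hw'
  have h₁ : Near _ _ _ _ := hu.2 w hw
  refine (h.and hC h₁).mono fun x _ ⟨hx, hx₁⟩ => ?_
  obtain ⟨c1, c2, c3, -⟩ := hC
  grind

theorem not_tangent_of_near (hC : IsCRelation (interpC L M r)) {u v : M} (hu : u ∈ F.U)
    (h : Near (interpC L M r) F.V F.e fun x => interpC L M r (F.f v x) (F.f u x) (g x)) :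
    v ∉ F.Tset g := by
  intro hv
  have h₁ : Near _ _ _ _ := hv.2 u hu
  obtain ⟨x, -, hx, hx₁⟩ := (h.and hC h₁).exists_mem hC
  exact hx₁ hx

theorem node_subset_tset (hC : IsCRelation (interpC L M r)) (hmin : CMinimal L M r)
    (hg : DefinableFunOn L M F.V g) {u v : M} (hu : u ∈ F.Tset g) (hv : v ∈ F.Tset g) :
    node (interpC L M r) u v ⊆ F.Tset g := by
  intro z hz
  have hzU := F.node_subset hC hu.1 hv.1 hz
  by_contra hzT
  obtain ⟨x, hx, h₁, h₂⟩ := ((F.near_of_not_tangent hC hmin hg hu ⟨hzU, hzT⟩).and hC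
    (F.near_of_not_tangent hC hmin hg hv ⟨hzU, hzT⟩)).exists_mem hC
  refine hz ((F.rel_apply_iff hx hzU hu.1 hv.1).1 ?_)
  obtain ⟨c1, c2, c3, -⟩ := hC
  grind

/-- The cone on which `f z` is not `C`-separated from `f u` and `g` can be chosen uniformly for
`z` in the node of two tangents. -/
theorem near_forall_node (hC : IsCRelation (interpC L M r)) (hmin : CMinimal L M r)
    (hg : DefinableFunOn L M F.V g) {u v : M} (hu : u ∈ F.Tset g) (hv : v ∈ F.Tset g)
    (huv : u ≠ v) :
    Near (interpC L M r) F.V F.e fun x => ∀ z ∈ node (interpC L M r) u v,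
      Delta (interpC L M r) (F.f u x) (F.f z x) (g x) := by
  have huv₁ : Near _ _ _ _ := hu.2 v hv.1
  have huv₂ : Near _ _ _ _ := hv.2 u hu.1
  have hΔ := huv₁.and hC huv₂
  by_contra hcon
  have hbad : ∀ p : M → Prop, Near (interpC L M r) F.V F.e p → ∃ x ∈ F.V \ {F.e}, p x ∧
      ∃ z ∈ node (interpC L M r) u v, interpC L M r (F.f u x) (F.f z x) (g x) ∧
        ¬ interpC L M r (F.f u x) (F.f v x) (g x) ∧
        ¬ interpC L M r (F.f v x) (F.f u x) (g x) := by
    intro p hp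
    by_contra! hall
    refine hcon ((hp.and hC hΔ).mono fun x hx ⟨hpx, hx₁, hx₂⟩ z hz => ?_)
    have h₁ : ¬ interpC L M r (F.f u x) (F.f z x) (g x) :=
      fun h => hx₂ (hall x hx hpx z hz h hx₁)
    refine ⟨h₁, fun h₂ => ?_⟩
    have hz' := mt (F.rel_apply_iff hx (F.node_subset hC hu.1 hv.1 hz) hu.1 hv.1).1 hz
    obtain ⟨c1, c2, c3, -⟩ := hC
    clear hall
    grind
  have hseq := exists_seq_of_forall_finset_exists
    (fun q : M × M => q.1 ∈ node (interpC L M r) u v ∧ q.2 ∈ F.V \ {F.e} ∧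
      interpC L M r (F.f u q.2) (F.f q.1 q.2) (g q.2) ∧
      ¬ interpC L M r (F.f u q.2) (F.f v q.2) (g q.2) ∧
      ¬ interpC L M r (F.f v q.2) (F.f u q.2) (g q.2))
    (fun q q' : M × M => ¬ interpC L M r q'.2 q.2 F.e ∧ ∀ y, y ≠ F.e →
      ¬ interpC L M r y q'.2 F.e → ¬ interpC L M r (F.f u y) (F.f q.1 y) (g y))
    (by
      intro s hs
      have hnear : Near (interpC L M r) F.V F.e fun y => ∀ q ∈ s, interpC L M r q.2 y F.e ∧
          ¬ interpC L M r (F.f u y) (F.f q.1 y) (g y) := by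
        refine Near.forall_mem_finset hC F.coneV F.he s fun q hq => Near.and hC ?_ ?_
        · obtain ⟨W, hW, he, hWV, h⟩ := hC.exists_cone_apart F.coneV F.he (finite_singleton q.2)
          exact ⟨W, hW, he, hWV, fun x hx => h _ rfl (hs q hq).2.1.2 x hx.1⟩
        · exact hu.2 q.1 (F.node_subset hC hu.1 hv.1 (hs q hq).1)
      obtain ⟨W, hW, he, hWV, h⟩ := hnear
      obtain ⟨x, hx, hxW, z, hz, hzx⟩ := hbad (· ∈ W) ⟨W, hW, he, hWV, fun x hx => hx.1⟩
      refine ⟨(z, x), ⟨hz, hx, hzx⟩, fun q hq => ⟨hC.2.1 _ _ _ (h x ⟨hxW, hx.2⟩ q hq).1, ?_⟩⟩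
      intro y hye hy
      refine (h y ⟨?_, hye⟩ q hq).2
      obtain ⟨a, b, -, rfl⟩ := hW
      obtain ⟨c1, c2, c3, -⟩ := hC
      clear h hs hcon hbad
      simp only [mem_ofPred_eq] at he hxW ⊢
      have h₁ : interpC L M r a x F.e := by grind
      have h₂ : interpC L M r a y F.e := by grind
      grind)
  obtain ⟨s, hs, hss⟩ := hseq
  have hS : (univ : Set M).Definable L {w : Fin 2 → M | ∃ y, y ≠ F.e ∧
      ¬ interpC L M r y (w 1) F.e ∧ u ∈ F.U ∧ w 0 ∈ F.U ∧ y ∈ F.V ∧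
      interpC L M r (F.f u y) (F.f (w 0) y) (g y)} := by
    refine definable_exists ?_
    exact ((definable_eq (definableFun_coord 2) (definableFun_param F.e)).compl).inter
      (((definable_interpC (definableFun_coord 2) (definableFun_coord 1)
        (definableFun_param F.e)).compl).inter (F.definable_interpC_apply hg
          (definableFun_param u) (definableFun_coord 0) (definableFun_coord 2)))
  have hirr : ∀ x y, ¬ interpC L M r x x y := fun x y h => hC.2.1 _ _ _ h h
  refine hmin.false_of_tails hC hS huv (t := fun n => (s n).2) (z := fun n => (s n).1)
    (fun i => (hs i).1) (fun i j hij => ?_) (fun n i hni => ?_) (fun n i hin => ?_)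
  · obtain ⟨hzj, hxj, hj, hΔ₁, hΔ₂⟩ := hs j
    have hij' := (hss i j hij).2 _ hxj.2 (hirr _ _)
    have hziU := F.node_subset hC hu.1 hv.1 (hs i).1
    have hzjU := F.node_subset hC hu.1 hv.1 hzj
    have hzi' := mt (F.rel_apply_iff hxj hziU hu.1 hv.1).1 (hs i).1
    have hzj' := mt (F.rel_apply_iff hxj hzjU hu.1 hv.1).1 hzj
    rw [← F.rel_apply_iff hxj hu.1 hziU hzjU, ← F.rel_apply_iff hxj hv.1 hziU hzjU]
    obtain ⟨c1, c2, c3, -⟩ := hC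
    clear hs hss hcon hbad hirr
    grind
  · refine ⟨(s i).2, (hs i).2.1.2, ?_, hu.1, F.node_subset hC hu.1 hv.1 (hs i).1, (hs i).2.1.1,
      (hs i).2.2.1⟩
    rcases hni.eq_or_lt with rfl | h
    · exact hirr _ _
    · exact (hss n i h).1
  · rintro ⟨y, hye, hy, -, -, -, hc⟩
    exact (hss i n hin).2 y hye hy hc

theorem tset_eq (hC : IsCRelation (interpC L M r)) (hmin : CMinimal L M r)
    (hg : DefinableFunOn L M F.V g) {u : M} (hu : u ∈ F.Tset g) :
    F.Tset g = {v | v ∈ F.U ∧ Near (interpC L M r) F.V F.e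
      (fun x => ¬ interpC L M r (F.f v x) (F.f u x) (g x))} := by
  ext v
  refine ⟨fun hv => ⟨hv.1, hv.2 u hu.1⟩, fun hv => ?_⟩
  by_contra hvT
  obtain ⟨x, -, hx, hx₁⟩ :=
    ((F.near_of_not_tangent hC hmin hg hu ⟨hv.1, hvT⟩).and hC hv.2).exists_mem hC
  exact hx₁ hx

end Tangent

end NiceFamily

theorem statement8 {L : FirstOrder.Language.{u, u}} {M : Type u} [L.Structure M]
    (r : L.Relations 3)
    (hC : IsCRelation (interpC L M r))
    (hmin : CMinimal L M r)
    (F : NiceFamily L M (interpC L M r))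
    (g : M → M) (hg : DefinableFunOn L M F.V g)
    (hgV : Set.MapsTo g F.V F.V) (hge : g F.e = F.e) :
    (∀ u ∈ F.Tset g, ∀ v ∈ F.Tset g,
      node (interpC L M r) u v ⊆ F.Tset g ∧
      ∃ W : Set M, IsCone (interpC L M r) W ∧ F.e ∈ W ∧ W ⊆ F.V ∧
        ∀ z ∈ node (interpC L M r) u v, ∀ x ∈ W,
          Delta (interpC L M r) (F.f u x) (F.f z x) (g x)) ∧
    (∀ u ∈ F.Tset g, ∀ v ∈ F.U \ F.Tset g,
      {z | interpC L M r u z v} ⊆ F.U \ F.Tset g ∧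
      ∃ W : Set M, IsCone (interpC L M r) W ∧ F.e ∈ W ∧ W ⊆ F.V ∧
        ∀ z ∈ {z | interpC L M r u z v}, ∀ x ∈ W \ {F.e},
          interpC L M r (F.f z x) (F.f u x) (g x)) ∧
    ((F.Tset g).Nonempty → IsBall (interpC L M r) (F.Tset g)) := by
  have hirr : ∀ x y, ¬ interpC L M r x x y := fun x y h => hC.2.1 _ _ _ h h
  refine ⟨fun u hu v hv => ⟨F.node_subset_tset hC hmin hg hu hv, ?_⟩,
    fun u hu v hv => ?_, fun ⟨u, hu⟩ => ?_⟩
  · by_cases huv : u = v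
    · subst huv
      refine ⟨F.V, F.coneV, F.he, Subset.rfl, fun z hz x _ => ?_⟩
      have hzu : z = u := by
        by_contra h
        exact hz (hC.apart h)
      subst hzu
      exact ⟨hirr _ _, hirr _ _⟩
    · obtain ⟨W, hW, he, hWV, h⟩ := F.near_forall_node hC hmin hg hu hv huv
      refine ⟨W, hW, he, hWV, fun z hz x hx => ?_⟩
      by_cases hxe : x = F.e
      · rw [hxe, F.fixe u hu.1, F.fixe z (F.node_subset hC hu.1 hv.1 hz), hge]
        exact ⟨hirr _ _, hirr _ _⟩
      · exact h x ⟨hx, hxe⟩ z hz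
  · obtain ⟨W, hW, he, hWV, h⟩ := F.near_of_not_tangent hC hmin hg hu hv
    have hsub := F.cone_subset hC hu.1 hv.1
    have key : ∀ z ∈ {z | interpC L M r u z v}, ∀ x ∈ W \ {F.e},
        interpC L M r (F.f z x) (F.f u x) (g x) := by
      intro z hz x hx
      have h₁ := h x hx
      have h₂ := (F.rel_apply_iff ⟨hWV hx.1, hx.2⟩ hu.1 (hsub hz) hv.1).2 hz
      obtain ⟨c1, c2, c3, -⟩ := hC
      clear h hz hsub
      grind
    exact ⟨fun z hz => ⟨hsub hz, F.not_tangent_of_near hC hu.1 ⟨W, hW, he, hWV, key z hz⟩⟩,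
      W, hW, he, hWV, key⟩
  · have hdef := F.definable_near_not hC hg hu.1
    rw [← F.tset_eq hC hmin hg hu] at hdef
    refine (hmin.qfDef hdef).isBall hC
      (fun v hv w hw => F.node_subset_tset hC hmin hg hv hw) ⟨u, hu⟩ ?_
    obtain ⟨a, b, -, hU⟩ := F.coneU
    refine ⟨a, fun ha => ?_⟩
    have haU := ha.1
    rw [hU] at haU
    exact hirr _ _ haU

end CMinPaper
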